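/- arXiv:1211.2864 — 2 statements merged into one kernel-verified Lean document; each statement's English description precedes it below -/
import Mathlib

section
/- The cardinalities of T_1, T_2, T_3 are |T_1| = 2^s + 1, |T_2| = 2^{2s−1} + 2^{s−1}, and |T_3| = 2^{2s−1} − 2^{s−1}. -/
noncomputable section

open scoped BigOperators

/-- `M = 2^{2s} + 2^s + 1`. -/
abbrev Mof (s : ℕ) : ℕ := 2 ^ (2 * s) + 2 ^ s + 1

/-- The relative trace from `F` (of order `2^{3s}`) to its subfield `E` of order `2^s`:
`Tr_{F/E}(x) = x + x^{2^s} + x^{2^{2s}}`, viewed as a map `F → F`. -/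
def trFE {F : Type*} [Field F] (s : ℕ) (x : F) : F :=
  x + x ^ (2 ^ s) + x ^ (2 ^ (2 * s))

/-- `ψ(x) = 1` if the absolute trace `Tr_{F/𝔽₂}(x) = 0`, and `-1` otherwise. -/
def psi (F : Type*) [Field F] [Algebra (ZMod 2) F] (x : F) : ℤ :=
  if Algebra.trace (ZMod 2) F x = 0 then 1 else -1

/-- `ψ(cS) = ∑_{x ∈ S} ψ(c·x)`. -/
def psiSum (F : Type*) [Field F] [Algebra (ZMod 2) F] (c : F) (S : Set F) : ℤ :=
  ∑ᶠ x ∈ S, psi F (c * x)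

/-- `D = {u ∈ F^× : Tr_{F/E}(u⁻¹) = 0}`. -/
def Dset (F : Type*) [Field F] (s : ℕ) : Set F :=
  {u | u ≠ 0 ∧ trFE s u⁻¹ = 0}

/-- `S_a = {u ∈ F^× : Tr_{F/E}(u^{2^s+1}) = 0 ∧ Tr_{F/E}(ω^a u) = 0}`. -/
def Sa {F : Type*} [Field F] (s : ℕ) (ω : F) (a : ℤ) : Set F :=
  {u | u ≠ 0 ∧ trFE s (u ^ (2 ^ s + 1)) = 0 ∧ trFE s (ω ^ a * u) = 0}

/-- `T₁ ⊆ ℤ/Mℤ`: classes `a` with `|S_a| = 2^s - 1`. -/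
def T1 {F : Type*} [Field F] (s : ℕ) (ω : F) : Set (ZMod (Mof s)) :=
  {x | (Sa s ω (x.val : ℤ)).ncard = 2 ^ s - 1}

/-- `T₂ ⊆ ℤ/Mℤ`: classes `a` with `|S_a| = 2(2^s - 1)`. -/
def T2 {F : Type*} [Field F] (s : ℕ) (ω : F) : Set (ZMod (Mof s)) :=
  {x | (Sa s ω (x.val : ℤ)).ncard = 2 * (2 ^ s - 1)}

/-- `T₃ ⊆ ℤ/Mℤ`: classes `a` with `|S_a| = 0`. -/
def T3 {F : Type*} [Field F] (s : ℕ) (ω : F) : Set (ZMod (Mof s)) :=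
  {x | (Sa s ω (x.val : ℤ)).ncard = 0}

/-- The cyclotomic class `C_i^{(M,K)} = {g^{i+Mt} : t ∈ ℤ}`. -/
def cyc {K : Type*} [Field K] (M : ℕ) (g : K) (i : ℤ) : Set K :=
  {x | ∃ t : ℤ, x = g ^ (i + (M : ℤ) * t)}

/-- `⋃_{i ∈ T} C_i^{(M,K)}` for a set `T ⊆ ℤ/Mℤ` of indices. -/
def Rclass {K : Type*} [Field K] (s : ℕ) (g : K) (T : Set (ZMod (Mof s))) : Set K :=
  ⋃ i ∈ T, cyc (Mof s) g ((i.val : ℤ))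

/-- The family `R_0 = {0}`, `R_k = ⋃_{i ∈ T_k} C_i^{(M,K)}`, `k = 1, 2, 3`. -/
def Rfam {F K : Type*} [Field F] [Field K] (s : ℕ) (ω : F) (g : K) : Fin 4 → Set K :=
  ![{0}, Rclass s g (T1 s ω), Rclass s g (T2 s ω), Rclass s g (T3 s ω)]

/-- Indicator `[P] = 1` if `P` holds, `0` otherwise. -/
def Ind (P : Prop) : ℤ := @ite ℤ P (Classical.propDecidable P) 1 0

/-!
Let `q = 2 ^ s`. On the three-dimensional `E`-space `F`, the quadratic form
`Q u = Tr_{F/E}(u ^ (q + 1))` has polar form `Tr x * Tr y - Tr (x * y)`, whose radical in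
characteristic two is the line `E ⊆ F`. So `Q` defines a nondegenerate conic with nucleus `1` in the
projective plane of `F`, and `S_a` consists of the `q - 1` multiples of each point in which the
conic meets the line `Tr (ω ^ a * u) = 0`. Since `ω` generates `Fˣ` and `Eˣ` has index `M` in it,
every line of the plane occurs for exactly one `a` modulo `M`.

Hence `T₁`, `T₂` and `T₃` correspond to the tangents, the secants and the passants of the conic. The
tangents are the `q + 1` lines through the nucleus. Each of the `q + 1` points of the conic lies on
`q + 1` lines, so counting incidences gives `q * (q + 1) / 2` secants; the other lines are passants.
-/

section HyperbolicPlane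

variable {K V : Type*} [Field K] [AddCommGroup V] [Module K V] {Q : QuadraticForm K V}

/-- The nonzero isotropic vectors of a quadratic form. For a ternary form this is the cone over a
projective conic, with its vertex removed. -/
def isotropicVectors (Q : QuadraticForm K V) : Set V := {x | x ≠ 0 ∧ Q x = 0}

lemma ncard_isotropicVectors_comp_subtype (Q : QuadraticForm K V) (W : Submodule K V) :
    (isotropicVectors (Q.comp W.subtype)).ncard = (isotropicVectors Q ∩ W).ncard := by
  rw [← Set.ncard_image_of_injective _ W.subtype_injective]
  congr 1
  ext x
  simp only [isotropicVectors, Set.mem_image, Set.mem_inter_iff, Set.mem_ofPred_eq]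
  constructor
  · rintro ⟨y, ⟨hy, hQy⟩, rfl⟩
    exact ⟨⟨by simpa using hy, hQy⟩, y.2⟩
  · rintro ⟨⟨hx, hQx⟩, hxW⟩
    exact ⟨⟨x, hxW⟩, ⟨by simpa using hx, hQx⟩, rfl⟩

lemma exists_isotropic_polar_eq_one {u v : V} (hu : Q u = 0)
    (huv : QuadraticMap.polar Q u v ≠ 0) : ∃ w, Q w = 0 ∧ QuadraticMap.polar Q u w = 1 := by
  set B := QuadraticMap.polar Q u v with hB
  refine ⟨B⁻¹ • (v + (-(Q v / B)) • u), ?_, ?_⟩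
  · rw [QuadraticMap.map_smul, QuadraticMap.map_add Q, QuadraticMap.map_smul, hu,
      QuadraticMap.polar_smul_right, QuadraticMap.polar_comm, ← hB]
    simp [huv]
  · rw [QuadraticMap.polar_smul_right, QuadraticMap.polar_add_right,
      QuadraticMap.polar_smul_right, QuadraticMap.polar_self, hu, ← hB]
    simp [huv]

lemma map_smul_add_smul_of_hyperbolic {u w : V} (hu : Q u = 0) (hw : Q w = 0)
    (huw : QuadraticMap.polar Q u w = 1) (a b : K) : Q (a • u + b • w) = a * b := by
  simp [QuadraticMap.map_add, QuadraticMap.map_smul, hu, hw, huw, mul_comm]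

lemma exists_linearEquiv_mul_of_hyperbolic (hV : Module.finrank K V = 2) {u w : V} (hu : Q u = 0)
    (hw : Q w = 0) (huw : QuadraticMap.polar Q u w = 1) :
    ∃ e : (K × K) ≃ₗ[K] V, ∀ p, Q (e p) = p.1 * p.2 := by
  have : FiniteDimensional K V := .of_finrank_pos (by omega)
  let g : K × K →ₗ[K] V := (LinearMap.toSpanSingleton K V u).coprod (.toSpanSingleton K V w)
  have hg (p : K × K) : g p = p.1 • u + p.2 • w := rfl
  have hinj : Function.Injective g := by
    rw [injective_iff_map_eq_zero]
    intro p hp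
    rw [hg] at hp
    have hpu := congrArg (QuadraticMap.polar Q u) hp
    have hpw := congrArg (QuadraticMap.polar Q w) hp
    simp only [QuadraticMap.polar_add_right, QuadraticMap.polar_smul_right,
      QuadraticMap.polar_self, QuadraticMap.polar_zero_right, QuadraticMap.polar_comm Q w u,
      hu, hw, huw, smul_eq_mul, smul_zero, mul_zero, mul_one, zero_add, add_zero] at hpu hpw
    exact Prod.ext hpw hpu
  exact ⟨g.linearEquivOfInjective hinj (by simp [hV]),
    fun p => map_smul_add_smul_of_hyperbolic hu hw huw p.1 p.2⟩

lemma ncard_ne_zero_mul_eq_zero (K : Type*) [MulZeroClass K] [NoZeroDivisors K] [Finite K] :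
    {p : K × K | p ≠ 0 ∧ p.1 * p.2 = 0}.ncard = 2 * (Nat.card K - 1) := by
  have axes : {p : K × K | p ≠ 0 ∧ p.1 * p.2 = 0} = {0}ᶜ ×ˢ {0} ∪ {0} ×ˢ {0}ᶜ := by
    ext ⟨a, b⟩
    simp only [Set.mem_ofPred_eq, ne_eq, Prod.mk_eq_zero, mul_eq_zero, Set.mem_union,
      Set.mem_prod, Set.mem_compl_iff, Set.mem_singleton_iff]
    tauto
  have disjoint : Disjoint (({0} : Set K)ᶜ ×ˢ {0}) ({0} ×ˢ ({0} : Set K)ᶜ) :=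
    Set.disjoint_prod.mpr (.inl disjoint_compl_left)
  rw [axes, Set.ncard_union_eq disjoint, Set.ncard_prod, Set.ncard_prod, Set.ncard_compl,
    Set.ncard_singleton, mul_one, one_mul, two_mul]

lemma ncard_isotropicVectors_of_polar_ne_zero [Finite K] (hV : Module.finrank K V = 2) {u v : V}
    (hu : Q u = 0) (huv : QuadraticMap.polar Q u v ≠ 0) :
    (isotropicVectors Q).ncard = 2 * (Nat.card K - 1) := by
  obtain ⟨w, hw, huw⟩ := exists_isotropic_polar_eq_one hu huv
  obtain ⟨e, he⟩ := exists_linearEquiv_mul_of_hyperbolic hV hu hw huw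
  have himage : isotropicVectors Q = e '' {p | p ≠ 0 ∧ p.1 * p.2 = 0} := by
    rw [LinearEquiv.image_eq_preimage_symm]
    ext x
    simp [isotropicVectors, ← he]
  rw [himage, Set.ncard_image_of_injective _ e.injective, ncard_ne_zero_mul_eq_zero]

end HyperbolicPlane

section Duality

variable {K V : Type*} [Field K] [Finite K] [AddCommGroup V] [Module K V] [FiniteDimensional K V]

lemma ncard_dual_ne_zero_apply_eq_zero {u : V} (hu : u ≠ 0) :
    {f : Module.Dual K V | f ≠ 0 ∧ f u = 0}.ncard =
      Nat.card K ^ (Module.finrank K V - 1) - 1 := by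
  have hker := Module.Dual.finrank_ker_add_one_of_ne_zero
    ((Module.eval_apply_eq_zero_iff K u).not.mpr hu)
  rw [Subspace.dual_finrank_eq] at hker
  have hset : {f : Module.Dual K V | f ≠ 0 ∧ f u = 0} =
      (LinearMap.ker (Module.Dual.eval K V u) : Set (Module.Dual K V)) \ {0} := by
    ext f
    simp [and_comm]
  have : Finite (Module.Dual K V) := Module.finite_of_finite K
  rw [hset, Set.ncard_sdiff_singleton_of_mem (zero_mem _), ← hker, Nat.add_sub_cancel,
    ← Nat.card_coe_set_eq, SetLike.coe_sort_coe, Module.natCard_eq_pow_finrank (K := K)]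

open Classical in
lemma sum_ncard_inter_ker [Fintype (Module.Dual K V)] {A : Set V} (hA : ∀ u ∈ A, u ≠ 0) :
    ∑ f : Module.Dual K V with f ≠ 0, (A ∩ LinearMap.ker f).ncard =
      A.ncard * (Nat.card K ^ (Module.finrank K V - 1) - 1) := by
  have : Finite V := Module.finite_of_finite K
  have := Fintype.ofFinite V
  have hline (f : Module.Dual K V) : (A ∩ LinearMap.ker f).ncard =
      (A.toFinset.bipartiteAbove (fun f u => f u = 0) f).card := by
    rw [← Set.ncard_coe_finset]
    congr 1
    ext u
    simp [Finset.bipartiteAbove]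
  simp only [hline]
  rw [Finset.sum_card_bipartiteAbove_eq_sum_card_bipartiteBelow, Set.ncard_eq_toFinset_card',
    ← smul_eq_mul]
  refine Finset.sum_eq_card_nsmul fun u hu => ?_
  rw [← ncard_dual_ne_zero_apply_eq_zero (hA u (Set.mem_toFinset.mp hu)), ← Set.ncard_coe_finset]
  congr 1
  ext f
  simp [Finset.bipartiteBelow]

end Duality

section Nucleus

variable {K V : Type*} [Field K] [AddCommGroup V] [Module K V]

/-- `n` is a nucleus of `Q`: a non-isotropic vector spanning the radical of the polar form. When
`dim V = 3` and `char K = 2`, a form with a nucleus defines a nondegenerate conic, and the lines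
through the projective point `n` are its tangents. -/
structure IsNucleus (Q : QuadraticForm K V) (n : V) : Prop where
  map_ne_zero : Q n ≠ 0
  ker_polarBilin : LinearMap.ker Q.polarBilin = K ∙ n

variable {Q : QuadraticForm K V} {n : V}

lemma IsNucleus.polar_eq_zero (hn : IsNucleus Q n) (x : V) : QuadraticMap.polar Q n x = 0 := by
  have hmem : n ∈ LinearMap.ker Q.polarBilin :=
    hn.ker_polarBilin ▸ Submodule.mem_span_singleton_self n
  exact LinearMap.congr_fun (LinearMap.mem_ker.mp hmem) x

lemma map_add_smul_of_polar_eq_zero (hpolar : ∀ x, QuadraticMap.polar Q n x = 0) (x : V) (a : K) :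
    Q (x + a • n) = Q x + a ^ 2 * Q n := by
  rw [QuadraticMap.map_add Q, QuadraticMap.map_smul, QuadraticMap.polar_smul_right,
    QuadraticMap.polar_comm, hpolar, smul_zero, add_zero, smul_eq_mul, sq]

lemma existsUnique_isotropic_add_smul [CharP K 2] [PerfectRing K 2] (hQn : Q n ≠ 0)
    (hpolar : ∀ x, QuadraticMap.polar Q n x = 0) (x : V) : ∃! a : K, Q (x + a • n) = 0 := by
  obtain ⟨a, ha, ha_unique⟩ := (bijective_frobenius K 2).existsUnique (-(Q x / Q n))
  have hiff (b : K) : Q (x + b • n) = 0 ↔ frobenius K 2 b = -(Q x / Q n) := by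
    rw [map_add_smul_of_polar_eq_zero hpolar, frobenius_def, ← neg_div, eq_div_iff hQn,
      add_comm, add_eq_zero_iff_eq_neg]
  exact ⟨a, (hiff a).mpr ha, fun b hb => ha_unique b ((hiff b).mp hb)⟩

-- Every line in the direction of the nucleus contains exactly one isotropic vector.
lemma ncard_map_eq_zero_mul [CharP K 2] [PerfectRing K 2] (hQn : Q n ≠ 0)
    (hpolar : ∀ x, QuadraticMap.polar Q n x = 0) :
    {x | Q x = 0}.ncard * Nat.card K = Nat.card V := by
  rw [← Nat.card_coe_set_eq, ← Nat.card_prod]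
  refine Nat.card_eq_of_bijective (fun p => (p.1 : V) + p.2 • n) ⟨?_, fun x => ?_⟩
  · rintro ⟨⟨x, hx⟩, a⟩ ⟨⟨y, hy⟩, b⟩ (h : x + a • n = y + b • n)
    have hxy : y = x + (a - b) • n := by rw [sub_smul, ← add_sub_assoc, h, add_sub_cancel_right]
    have hab : a - b = 0 :=
      (existsUnique_isotropic_add_smul hQn hpolar x).unique (hxy ▸ hy) (by simpa using hx)
    obtain rfl := sub_eq_zero.mp hab
    simp [add_right_cancel h]
  · obtain ⟨a, ha, -⟩ := existsUnique_isotropic_add_smul hQn hpolar x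
    exact ⟨(⟨x + a • n, ha⟩, -a), by simp⟩

lemma ncard_isotropicVectors_of_polar_eq_zero [CharP K 2] [Finite K] [FiniteDimensional K V]
    (hQn : Q n ≠ 0) (hpolar : ∀ x, QuadraticMap.polar Q n x = 0) :
    (isotropicVectors Q).ncard = Nat.card K ^ (Module.finrank K V - 1) - 1 := by
  have : Finite V := Module.finite_of_finite K
  have : Nontrivial V := ⟨n, 0, fun h => hQn (by rw [h, QuadraticMap.map_zero])⟩
  have hset : isotropicVectors Q = {x | Q x = 0} \ {0} := by
    ext x
    simp [isotropicVectors, and_comm]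
  rw [hset, Set.ncard_sdiff_singleton_of_mem (s := {x | Q x = 0}) Q.map_zero]
  congr 1
  refine Nat.eq_of_mul_eq_mul_right (Nat.card_pos (α := K)) ?_
  rw [ncard_map_eq_zero_mul hQn hpolar, Module.natCard_eq_pow_finrank (K := K), ← pow_succ,
    Nat.sub_add_cancel Module.finrank_pos]

lemma IsNucleus.exists_mem_polar_ne_zero (hn : IsNucleus Q n) {f : Module.Dual K V}
    (hfn : f n ≠ 0) {u : V} (hu : u ≠ 0) (hfu : f u = 0) :
    ∃ v, f v = 0 ∧ QuadraticMap.polar Q u v ≠ 0 := by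
  by_contra! hker
  have hrad : u ∈ LinearMap.ker Q.polarBilin := by
    refine LinearMap.mem_ker.mpr (LinearMap.ext fun v => ?_)
    have hproj := hker (v - (f v / f n) • n) (by simp [hfn])
    rwa [QuadraticMap.polar_sub_right, QuadraticMap.polar_smul_right,
      QuadraticMap.polar_comm Q u n, hn.polar_eq_zero, smul_zero, sub_zero] at hproj
  rw [hn.ker_polarBilin] at hrad
  obtain ⟨a, rfl⟩ := Submodule.mem_span_singleton.mp hrad
  have ha : a = 0 := by simpa [hfn] using hfu
  exact hu (by rw [ha, zero_smul])

end Nucleus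

section Conic

variable {K V : Type*} [Field K] [AddCommGroup V] [Module K V] {Q : QuadraticForm K V} {n : V}

lemma finrank_ker_of_finrank_eq_three (hV : Module.finrank K V = 3) {f : Module.Dual K V}
    (hf : f ≠ 0) : Module.finrank K (LinearMap.ker f) = 2 := by
  have : FiniteDimensional K V := .of_finrank_pos (by omega)
  have := Module.Dual.finrank_ker_add_one_of_ne_zero hf
  omega

/-- The nonzero functionals whose kernel contains exactly `k` nonzero isotropic vectors. For
`dim V = 3` these are the lines of the projective plane meeting the conic in `k / (|K| - 1)`
points, each line being represented by `|K| - 1` proportional functionals. -/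
def linesMeeting (Q : QuadraticForm K V) (k : ℕ) : Set (Module.Dual K V) :=
  {f | f ≠ 0 ∧ (isotropicVectors Q ∩ LinearMap.ker f).ncard = k}

variable [Finite K]

lemma IsNucleus.ncard_tangent [CharP K 2] (hn : IsNucleus Q n) (hV : Module.finrank K V = 3)
    {f : Module.Dual K V} (hf : f ≠ 0) (hfn : f n = 0) :
    (isotropicVectors Q ∩ LinearMap.ker f).ncard = Nat.card K - 1 := by
  have : FiniteDimensional K V := .of_finrank_pos (by omega)
  let n' : LinearMap.ker f := ⟨n, hfn⟩
  rw [← ncard_isotropicVectors_comp_subtype,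
    ncard_isotropicVectors_of_polar_eq_zero (n := n') hn.map_ne_zero
      (fun x => hn.polar_eq_zero x),
    finrank_ker_of_finrank_eq_three hV hf, pow_one]

lemma IsNucleus.ncard_secant_or_passant (hn : IsNucleus Q n) (hV : Module.finrank K V = 3)
    {f : Module.Dual K V} (hfn : f n ≠ 0) :
    (isotropicVectors Q ∩ LinearMap.ker f).ncard = 2 * (Nat.card K - 1) ∨
      (isotropicVectors Q ∩ LinearMap.ker f).ncard = 0 := by
  rcases (isotropicVectors Q ∩ LinearMap.ker f).eq_empty_or_nonempty with
    hempty | ⟨u, ⟨hu, hQu⟩, hfu⟩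
  · exact .inr (by rw [hempty, Set.ncard_empty])
  · obtain ⟨v, hfv, huv⟩ := hn.exists_mem_polar_ne_zero hfn hu hfu
    have hf : f ≠ 0 := fun h => hfn (by rw [h, LinearMap.zero_apply])
    left
    rw [← ncard_isotropicVectors_comp_subtype]
    exact ncard_isotropicVectors_of_polar_ne_zero (finrank_ker_of_finrank_eq_three hV hf)
      (u := ⟨u, hfu⟩) (v := ⟨v, hfv⟩) hQu huv

variable [CharP K 2]

lemma IsNucleus.linesMeeting_tangent (hn : IsNucleus Q n) (hV : Module.finrank K V = 3) :
    linesMeeting Q (Nat.card K - 1) = {f | f ≠ 0 ∧ f n = 0} := by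
  have hq : 1 < Nat.card K := Finite.one_lt_card
  ext f
  refine and_congr_right fun hf => ⟨fun htangent => ?_, hn.ncard_tangent hV hf⟩
  by_contra hfn
  rcases hn.ncard_secant_or_passant hV hfn with hsecant | hpassant <;> omega

theorem IsNucleus.ncard_linesMeeting_tangent (hn : IsNucleus Q n)
    (hV : Module.finrank K V = 3) :
    (linesMeeting Q (Nat.card K - 1)).ncard = (Nat.card K - 1) * (Nat.card K + 1) := by
  have : FiniteDimensional K V := .of_finrank_pos (by omega)
  have hn0 : n ≠ 0 := fun h => hn.map_ne_zero (by rw [h, QuadraticMap.map_zero])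
  rw [hn.linesMeeting_tangent hV, ncard_dual_ne_zero_apply_eq_zero hn0, hV, mul_comm]
  exact Nat.sq_sub_sq _ 1

open Classical in
lemma IsNucleus.sum_lines [Fintype (Module.Dual K V)] (hn : IsNucleus Q n)
    (hV : Module.finrank K V = 3) (g : ℕ → ℕ) :
    ∑ f : Module.Dual K V with f ≠ 0, g (isotropicVectors Q ∩ LinearMap.ker f).ncard =
      (linesMeeting Q (Nat.card K - 1)).ncard * g (Nat.card K - 1) +
        (linesMeeting Q (2 * (Nat.card K - 1))).ncard * g (2 * (Nat.card K - 1)) +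
        (linesMeeting Q 0).ncard * g 0 := by
  have hq : 1 < Nat.card K := Finite.one_lt_card
  have hmaps : ∀ f ∈ ({f | f ≠ 0} : Finset (Module.Dual K V)),
      (isotropicVectors Q ∩ LinearMap.ker f).ncard ∈
        ({Nat.card K - 1, 2 * (Nat.card K - 1), 0} : Finset ℕ) := by
    intro f hf
    simp only [Finset.mem_insert, Finset.mem_singleton]
    by_cases hfn : f n = 0
    · exact .inl (hn.ncard_tangent hV (Finset.mem_filter.mp hf).2 hfn)
    · exact .inr (hn.ncard_secant_or_passant hV hfn)
  have hfiber (k : ℕ) : ∑ f : Module.Dual K V with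
      f ≠ 0 ∧ (isotropicVectors Q ∩ LinearMap.ker f).ncard = k,
        g (isotropicVectors Q ∩ LinearMap.ker f).ncard = (linesMeeting Q k).ncard * g k := by
    rw [Finset.sum_eq_card_nsmul fun f hf => congrArg g (Finset.mem_filter.mp hf).2.2,
      smul_eq_mul, ← Set.ncard_coe_finset]
    simp [linesMeeting]
  rw [← Finset.sum_fiberwise_of_maps_to hmaps]
  simp only [Finset.filter_filter, hfiber]
  rw [Finset.sum_insert (by simp only [Finset.mem_insert, Finset.mem_singleton]; omega),
    Finset.sum_insert (by rw [Finset.mem_singleton]; omega), Finset.sum_singleton, add_assoc]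

-- Double counting of the pairs (isotropic vector, line containing it).
theorem IsNucleus.two_mul_ncard_linesMeeting_secant (hn : IsNucleus Q n)
    (hV : Module.finrank K V = 3) :
    2 * (linesMeeting Q (2 * (Nat.card K - 1))).ncard =
      (Nat.card K - 1) * (Nat.card K * (Nat.card K + 1)) := by
  have : FiniteDimensional K V := .of_finrank_pos (by omega)
  have : Finite (Module.Dual K V) := Module.finite_of_finite K
  have := Fintype.ofFinite (Module.Dual K V)
  have hincidences := hn.sum_lines hV id
  simp only [id] at hincidences
  rw [sum_ncard_inter_ker (fun u hu => hu.1),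
    ncard_isotropicVectors_of_polar_eq_zero hn.map_ne_zero hn.polar_eq_zero, hV,
    hn.ncard_linesMeeting_tangent hV, Nat.sq_sub_sq _ 1] at hincidences
  obtain ⟨k, hk⟩ := Nat.exists_eq_add_of_lt (Finite.one_lt_card (α := K))
  simp only [hk, Nat.add_sub_cancel] at hincidences ⊢
  refine Nat.eq_of_mul_eq_mul_right (Nat.zero_lt_succ k) ?_
  linarith

theorem IsNucleus.ncard_linesMeeting_add (hn : IsNucleus Q n) (hV : Module.finrank K V = 3) :
    (linesMeeting Q (Nat.card K - 1)).ncard + (linesMeeting Q (2 * (Nat.card K - 1))).ncard +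
      (linesMeeting Q 0).ncard = Nat.card K ^ 3 - 1 := by
  classical
  have : FiniteDimensional K V := .of_finrank_pos (by omega)
  have : Finite (Module.Dual K V) := Module.finite_of_finite K
  have := Fintype.ofFinite (Module.Dual K V)
  have hlines := hn.sum_lines hV fun _ => 1
  simp only [mul_one] at hlines
  rw [← hlines, ← Finset.card_eq_sum_ones, Finset.filter_ne', Finset.card_erase_of_mem
    (Finset.mem_univ _), Finset.card_univ, ← Nat.card_eq_fintype_card,
    Module.natCard_eq_pow_finrank (K := K), Subspace.dual_finrank_eq, hV]

theorem IsNucleus.two_mul_ncard_linesMeeting_passant (hn : IsNucleus Q n)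
    (hV : Module.finrank K V = 3) :
    2 * (linesMeeting Q 0).ncard = (Nat.card K - 1) * (Nat.card K * (Nat.card K - 1)) := by
  have htotal := hn.ncard_linesMeeting_add hV
  have hsecant := hn.two_mul_ncard_linesMeeting_secant hV
  rw [hn.ncard_linesMeeting_tangent hV] at htotal
  obtain ⟨k, hk⟩ := Nat.exists_eq_add_of_lt (Finite.one_lt_card (α := K))
  rw [eq_tsub_iff_add_eq_of_le (Nat.one_le_pow _ _ Nat.card_pos)] at htotal
  simp only [hk, Nat.add_sub_cancel] at htotal hsecant ⊢
  linarith

end Conic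

section TraceDual

variable {E F : Type*} [Field E] [Field F] [Algebra E F] [FiniteDimensional E F]
  [Algebra.IsSeparable E F]

lemma ncard_linesMeeting_eq_ncard_units (Q : QuadraticForm E F) (k : ℕ) :
    (linesMeeting Q k).ncard =
      {b : Fˣ | (isotropicVectors Q ∩
        LinearMap.ker (Algebra.traceForm E F b)).ncard = k}.ncard := by
  let e := (Algebra.traceForm E F).toDual (traceForm_nondegenerate E F)
  have himage : linesMeeting Q k = (fun b : Fˣ => e b) ''
      {b : Fˣ | (isotropicVectors Q ∩ LinearMap.ker (Algebra.traceForm E F b)).ncard = k} := by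
    ext f
    constructor
    · rintro ⟨hf, hk⟩
      have hb : e.symm f ≠ 0 := e.symm.map_ne_zero_iff.mpr hf
      have hef : Algebra.traceForm E F (e.symm f) = f := e.apply_symm_apply f
      exact ⟨Units.mk0 _ hb, by simpa [hef] using hk, by simp⟩
    · rintro ⟨b, hk, rfl⟩
      exact ⟨e.map_ne_zero_iff.mpr b.ne_zero, hk⟩
  rw [himage]
  exact Set.ncard_image_of_injective _ (e.injective.comp Units.val_injective)

end TraceDual

section CubicExtension

variable {E F : Type*} [Field E] [Field F] [Finite F] [Algebra E F]

lemma algebraMap_trace_of_finrank_eq_three (hEF : Module.finrank E F = 3) (x : F) :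
    algebraMap E F (Algebra.trace E F x) = x + x ^ Nat.card E + x ^ (Nat.card E ^ 2) := by
  simp [FiniteField.algebraMap_trace_eq_sum_pow, hEF, Finset.sum_range_succ]

lemma trace_mul_trace_of_finrank_eq_three (hEF : Module.finrank E F = 3) (x y : F) :
    Algebra.trace E F x * Algebra.trace E F y = Algebra.trace E F (x * y) +
      (Algebra.trace E F (x * y ^ Nat.card E) + Algebra.trace E F (x ^ Nat.card E * y)) := by
  have := Fintype.ofFinite F
  have hcycle (z : F) : z ^ (Nat.card E ^ 3) = z := by
    rw [← hEF, ← Module.natCard_eq_pow_finrank, Nat.card_eq_fintype_card, FiniteField.pow_card]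
  apply FaithfulSMul.algebraMap_injective E F
  simp only [map_add, map_mul, algebraMap_trace_of_finrank_eq_three hEF, mul_pow, ← pow_mul,
    ← pow_succ', Nat.reduceAdd, hcycle]
  ring

end CubicExtension

section TraceFrobeniusForm

variable (E F : Type*) [Field E] [Fintype E] [Field F] [Algebra E F]

/-- The quadratic form `x ↦ Tr_{F/E}(x ^ (q + 1))` on an extension `F` of a field `E` of order
`q`. -/
def traceFrobeniusForm : QuadraticForm E F :=
  LinearMap.BilinMap.toQuadraticMap
    ((Algebra.traceForm E F).compl₂ (FiniteField.frobeniusAlgHom E F).toLinearMap)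

variable {E F}

lemma traceFrobeniusForm_apply (x : F) :
    traceFrobeniusForm E F x = Algebra.trace E F (x ^ (Nat.card E + 1)) := by
  rw [pow_succ', Nat.card_eq_fintype_card]
  rfl

variable [Finite F]

lemma polar_traceFrobeniusForm (hEF : Module.finrank E F = 3) (x y : F) :
    QuadraticMap.polar (traceFrobeniusForm E F) x y =
      Algebra.traceForm E F (algebraMap E F (Algebra.trace E F x) - x) y := by
  have hpolar : QuadraticMap.polar (traceFrobeniusForm E F) x y =
      Algebra.trace E F (x * y ^ Nat.card E) + Algebra.trace E F (x ^ Nat.card E * y) := by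
    rw [mul_comm (x ^ _), Nat.card_eq_fintype_card]
    exact LinearMap.BilinMap.polar_toQuadraticMap x y
  rw [hpolar, Algebra.traceForm_apply, sub_mul, map_sub, ← Algebra.smul_def, map_smul,
    smul_eq_mul, trace_mul_trace_of_finrank_eq_three hEF, add_sub_cancel_left]

theorem isNucleus_one_traceFrobeniusForm [CharP E 2] (hEF : Module.finrank E F = 3) :
    IsNucleus (traceFrobeniusForm E F) 1 := by
  have htrace (c : E) : Algebra.trace E F (algebraMap E F c) = c := by
    rw [Algebra.trace_algebraMap, hEF, succ_nsmul, two_nsmul, CharTwo.add_self_eq_zero, zero_add]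
  have hpolar (x : F) : (traceFrobeniusForm E F).polarBilin x =
      Algebra.traceForm E F (algebraMap E F (Algebra.trace E F x) - x) :=
    LinearMap.ext (polar_traceFrobeniusForm hEF x)
  refine ⟨?_, ?_⟩
  · rw [traceFrobeniusForm_apply, one_pow, ← map_one (algebraMap E F), htrace]
    exact one_ne_zero
  · ext x
    rw [LinearMap.mem_ker, hpolar, ← LinearMap.mem_ker, (traceForm_nondegenerate E F).ker_eq_bot,
      Submodule.mem_bot, sub_eq_zero, Submodule.mem_span_singleton]
    refine ⟨fun hx => ⟨_, (Algebra.algebraMap_eq_smul_one _).symm.trans hx⟩, ?_⟩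
    rintro ⟨c, rfl⟩
    rw [← Algebra.algebraMap_eq_smul_one, htrace]

end TraceFrobeniusForm

section Exponents

lemma bijective_zmod_quotient_mk_pow {G : Type*} [CommGroup G] [Finite G] (H : Subgroup G) {g : G}
    (hg : ∀ x, x ∈ Subgroup.zpowers g) :
    Function.Bijective fun i : ZMod H.index => (QuotientGroup.mk (g ^ i.val) : G ⧸ H) := by
  have : NeZero H.index := ⟨H.index_ne_zero_of_finite⟩
  refine Function.Surjective.bijective_of_nat_card_le (fun y => ?_)
    (by rw [Nat.card_zmod, Subgroup.index])
  obtain ⟨x, rfl⟩ := QuotientGroup.mk_surjective y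
  obtain ⟨k, rfl⟩ := Subgroup.mem_zpowers_iff.mp (hg x)
  refine ⟨k, ?_⟩
  rw [← zpow_natCast, ZMod.val_intCast, QuotientGroup.mk_zpow, QuotientGroup.mk_zpow,
    Subgroup.index, zpow_mod_natCard]

lemma ncard_eq_card_subgroup_mul_ncard_zmod {G : Type*} [CommGroup G] [Finite G] (H : Subgroup G)
    {g : G} (hg : ∀ x, x ∈ Subgroup.zpowers g) {P : G → Prop}
    (hP : ∀ x, ∀ h ∈ H, P (x * h) ↔ P x) :
    {x | P x}.ncard = Nat.card H * {i : ZMod H.index | P (g ^ i.val)}.ncard := by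
  let T : Set (G ⧸ H) := QuotientGroup.mk '' {x | P x}
  have hT (x : G) : (x : G ⧸ H) ∈ T ↔ P x := by
    refine ⟨?_, fun hx => ⟨x, hx, rfl⟩⟩
    rintro ⟨y, hy, hyx⟩
    have := (hP y _ (QuotientGroup.eq.mp hyx)).mpr hy
    rwa [mul_inv_cancel_left] at this
  have hpreimage : {x | P x} = QuotientGroup.mk ⁻¹' T := Set.ext fun x => (hT x).symm
  have hexponents : {i : ZMod H.index | P (g ^ i.val)} =
      (fun i : ZMod H.index => (QuotientGroup.mk (g ^ i.val) : G ⧸ H)) ⁻¹' T :=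
    Set.ext fun i => (hT _).symm
  have hbij := bijective_zmod_quotient_mk_pow H hg
  rw [hexponents, Set.ncard_preimage_of_injective_subset_range hbij.injective
    (hbij.surjective.range_eq ▸ Set.subset_univ T), hpreimage, ← Nat.card_coe_set_eq,
    QuotientGroup.card_preimage_mk, Nat.card_coe_set_eq]

lemma exists_algebra_galoisField_finrank_eq {p d s : ℕ} [Fact p.Prime] (hs : s ≠ 0) {F : Type*}
    [Field F] [Finite F] (hF : Nat.card F = p ^ (d * s)) :
    ∃ _ : Algebra (GaloisField p s) F, Module.finrank (GaloisField p s) F = d := by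
  have := Fintype.ofFinite F
  have : CharP F p := charP_of_card_eq_prime_pow (Nat.card_eq_fintype_card.symm.trans hF)
  have hp : 1 < p := (Fact.out : p.Prime).one_lt
  let _ : Algebra (ZMod p) F := ZMod.algebra F p
  have hdvd : Module.finrank (ZMod p) (GaloisField p s) ∣ Module.finrank (ZMod p) F := by
    rw [← FiniteField.pow_finrank_eq_natCard p F] at hF
    rw [GaloisField.finrank p hs, Nat.pow_right_injective hp hF]
    exact Nat.dvd_mul_left s d
  obtain ⟨φ⟩ := FiniteField.nonempty_algHom_of_finrank_dvd hdvd
  let _ := φ.toRingHom.toAlgebra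
  refine ⟨inferInstance, ?_⟩
  have : Module.Finite (GaloisField p s) F := Module.Finite.of_finite
  rw [Module.natCard_eq_pow_finrank (K := GaloisField p s), GaloisField.card p s hs, ← pow_mul,
    mul_comm d] at hF
  exact Nat.eq_of_mul_eq_mul_left (Nat.pos_of_ne_zero hs) (Nat.pow_right_injective hp hF)

end Exponents

section SingerCycle

lemma exists_unit_generator {F : Type*} [Field F] [Nontrivial Fˣ] {ω : F}
    (hω : ∀ x : F, x ≠ 0 → ∃ n : ℕ, x = ω ^ n) :
    ∃ g : Fˣ, (g : F) = ω ∧ ∀ x, x ∈ Subgroup.zpowers g := by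
  have hω0 : ω ≠ 0 := by
    rintro rfl
    obtain ⟨x, hx⟩ := exists_ne (1 : Fˣ)
    obtain ⟨n, hn⟩ := hω x x.ne_zero
    rcases eq_or_ne n 0 with rfl | hn0
    · exact hx (Units.ext (by simpa using hn))
    · exact x.ne_zero (by rw [hn, zero_pow hn0])
  refine ⟨Units.mk0 ω hω0, rfl, fun x => ?_⟩
  obtain ⟨n, hn⟩ := hω x x.ne_zero
  exact ⟨n, Units.ext (by simp [hn])⟩

lemma ker_traceForm_mul_algebraMap {E F : Type*} [Field E] [Field F] [Algebra E F] (b : F)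
    {c : E} (hc : c ≠ 0) :
    LinearMap.ker (Algebra.traceForm E F (b * algebraMap E F c)) =
      LinearMap.ker (Algebra.traceForm E F b) := by
  rw [mul_comm, ← Algebra.smul_def, map_smul, LinearMap.ker_smul _ _ hc]

lemma card_range_unitsMap_algebraMap (E F : Type*) [Field E] [Finite E] [Field F] [Algebra E F] :
    Nat.card (Units.map (algebraMap E F : E →* F)).range = Nat.card E - 1 := by
  rw [← Nat.card_units]
  exact Nat.card_range_of_injective
    (Units.map_injective (FaithfulSMul.algebraMap_injective E F))

variable {E F : Type*} [Field E] [Field F] [Finite F] [Algebra E F]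

lemma index_range_unitsMap_algebraMap : (Units.map (algebraMap E F : E →* F)).range.index =
    ∑ i ∈ Finset.range (Module.finrank E F), Nat.card E ^ i := by
  have : Finite E := Finite.of_injective _ (FaithfulSMul.algebraMap_injective E F)
  have hq : 1 < Nat.card E := Finite.one_lt_card
  rw [Nat.geomSum_eq hq]
  refine Nat.eq_div_of_mul_eq_right (by omega) ?_
  rw [← card_range_unitsMap_algebraMap E F, Subgroup.card_mul_index, Nat.card_units,
    Module.natCard_eq_pow_finrank (K := E)]

lemma ncard_linesMeeting_eq_mul_ncard_zmod (Q : QuadraticForm E F) (k : ℕ) {g : Fˣ}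
    (hg : ∀ x, x ∈ Subgroup.zpowers g) {M : ℕ}
    (hM : (Units.map (algebraMap E F : E →* F)).range.index = M) :
    (linesMeeting Q k).ncard = (Nat.card E - 1) * {i : ZMod M | (isotropicVectors Q ∩
      LinearMap.ker (Algebra.traceForm E F (g ^ i.val : Fˣ))).ncard = k}.ncard := by
  have : Finite E := Finite.of_injective _ (FaithfulSMul.algebraMap_injective E F)
  subst hM
  rw [ncard_linesMeeting_eq_ncard_units, ← card_range_unitsMap_algebraMap E F]
  refine ncard_eq_card_subgroup_mul_ncard_zmod _ hg (P := fun b : Fˣ =>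
    (isotropicVectors Q ∩ LinearMap.ker (Algebra.traceForm E F b)).ncard = k) ?_
  rintro b - ⟨c, rfl⟩
  rw [Units.val_mul, Units.coe_map, MonoidHom.coe_coe, ker_traceForm_mul_algebraMap _ c.ne_zero]

end SingerCycle

section RelativeTrace

variable {E F : Type*} [Field E] [Field F] [Finite F] [Algebra E F] {s : ℕ}

lemma trFE_eq_algebraMap_trace (hE : Nat.card E = 2 ^ s) (hEF : Module.finrank E F = 3) (x : F) :
    trFE s x = algebraMap E F (Algebra.trace E F x) := by
  rw [algebraMap_trace_of_finrank_eq_three hEF, hE, ← pow_mul', trFE]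

lemma Sa_eq_isotropicVectors_inter_ker [Fintype E] (hE : Nat.card E = 2 ^ s)
    (hEF : Module.finrank E F = 3) (ω : F) (a : ℤ) :
    Sa s ω a = isotropicVectors (traceFrobeniusForm E F) ∩
      LinearMap.ker (Algebra.traceForm E F (ω ^ a)) := by
  have hQ (u : F) : traceFrobeniusForm E F u = Algebra.trace E F (u ^ (2 ^ s + 1)) := by
    rw [traceFrobeniusForm_apply, hE]
  ext u
  simp [Sa, isotropicVectors, hQ, trFE_eq_algebraMap_trace hE hEF, and_assoc,
    Algebra.traceForm_apply]

lemma ncard_linesMeeting_traceFrobeniusForm [Fintype E] (hE : Nat.card E = 2 ^ s)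
    (hEF : Module.finrank E F = 3) {ω : F} (hω : ∀ x : F, x ≠ 0 → ∃ n : ℕ, x = ω ^ n) (k : ℕ) :
    (linesMeeting (traceFrobeniusForm E F) k).ncard =
      (2 ^ s - 1) * {x : ZMod (Mof s) | (Sa s ω x.val).ncard = k}.ncard := by
  have hM : (Units.map (algebraMap E F : E →* F)).range.index = Mof s := by
    simp only [index_range_unitsMap_algebraMap, hEF, hE, Finset.sum_range_succ,
      Finset.sum_range_zero, ← pow_mul']
    ring
  have : Nontrivial Fˣ := by
    refine not_subsingleton_iff_nontrivial.mp fun _ => ?_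
    rw [Subsingleton.elim (Units.map (algebraMap E F : E →* F)).range ⊤, Subgroup.index_top] at hM
    simp at hM
  obtain ⟨g, rfl, hg⟩ := exists_unit_generator hω
  simp only [ncard_linesMeeting_eq_mul_ncard_zmod _ k hg hM, hE,
    Sa_eq_isotropicVectors_inter_ker hE hEF, zpow_natCast, Units.val_pow_eq_pow_val]

variable [Finite E] [CharP E 2]

theorem ncard_T1 (hE : Nat.card E = 2 ^ s) (hEF : Module.finrank E F = 3) {ω : F}
    (hω : ∀ x : F, x ≠ 0 → ∃ n : ℕ, x = ω ^ n) :
    (T1 s ω).ncard = 2 ^ s + 1 := by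
  have := Fintype.ofFinite E
  have hq : 0 < 2 ^ s - 1 := hE ▸ Nat.sub_pos_of_lt Finite.one_lt_card
  have hlines := (isNucleus_one_traceFrobeniusForm hEF).ncard_linesMeeting_tangent hEF
  rw [ncard_linesMeeting_traceFrobeniusForm hE hEF hω, hE] at hlines
  exact Nat.eq_of_mul_eq_mul_left hq hlines

theorem two_mul_ncard_T2 (hE : Nat.card E = 2 ^ s) (hEF : Module.finrank E F = 3) {ω : F}
    (hω : ∀ x : F, x ≠ 0 → ∃ n : ℕ, x = ω ^ n) :
    2 * (T2 s ω).ncard = 2 ^ s * (2 ^ s + 1) := by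
  have := Fintype.ofFinite E
  have hq : 0 < 2 ^ s - 1 := hE ▸ Nat.sub_pos_of_lt Finite.one_lt_card
  have hlines := (isNucleus_one_traceFrobeniusForm hEF).two_mul_ncard_linesMeeting_secant hEF
  rw [ncard_linesMeeting_traceFrobeniusForm hE hEF hω, hE, Nat.mul_left_comm] at hlines
  exact Nat.eq_of_mul_eq_mul_left hq hlines

theorem two_mul_ncard_T3 (hE : Nat.card E = 2 ^ s) (hEF : Module.finrank E F = 3) {ω : F}
    (hω : ∀ x : F, x ≠ 0 → ∃ n : ℕ, x = ω ^ n) :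
    2 * (T3 s ω).ncard = 2 ^ s * (2 ^ s - 1) := by
  have := Fintype.ofFinite E
  have hq : 0 < 2 ^ s - 1 := hE ▸ Nat.sub_pos_of_lt Finite.one_lt_card
  have hlines := (isNucleus_one_traceFrobeniusForm hEF).two_mul_ncard_linesMeeting_passant hEF
  rw [ncard_linesMeeting_traceFrobeniusForm hE hEF hω, hE, Nat.mul_left_comm] at hlines
  exact Nat.eq_of_mul_eq_mul_left hq hlines

end RelativeTrace

theorem statement2 (s : ℕ) (hs : 1 ≤ s) (F : Type*) [Field F] [Fintype F]
    (hF : Fintype.card F = 2 ^ (3 * s)) (ω : F)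
    (hω : ∀ x : F, x ≠ 0 → ∃ n : ℕ, x = ω ^ n) :
    (T1 s ω).ncard = 2 ^ s + 1 ∧
    (T2 s ω).ncard = 2 ^ (2 * s - 1) + 2 ^ (s - 1) ∧
    (T3 s ω).ncard = 2 ^ (2 * s - 1) - 2 ^ (s - 1) := by
  have hE : Nat.card (GaloisField 2 s) = 2 ^ s := GaloisField.card 2 s (by omega)
  obtain ⟨_, hEF⟩ := exists_algebra_galoisField_finrank_eq (s := s) (by omega)
    (Nat.card_eq_fintype_card.trans hF)
  have hT1 := ncard_T1 hE hEF hω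
  have hT2 := two_mul_ncard_T2 hE hEF hω
  have hT3 := two_mul_ncard_T3 hE hEF hω
  have hpow : 2 * 2 ^ (s - 1) = 2 ^ s := mul_pow_sub_one (by omega) 2
  have hpow_sq : 2 * 2 ^ (2 * s - 1) = 2 ^ s * 2 ^ s := by
    rw [mul_pow_sub_one (by omega), two_mul, pow_add]
  rw [mul_add_one] at hT2
  rw [Nat.mul_sub_one] at hT3
  omega
end
end

section
/- For every nonzero a ∈ ℤ/Mℤ, there is exactly one pair (i, j) ∈ T_1 × T_1 with i − j = a; that is, T_1 is a planar (Singer) difference set in ℤ/Mℤ with parameters (2^{2s}+2^s+1, 2^s+1, 1), so that T_1·T_1^{(−1)} = 2^s + ℤ/Mℤ in the group ring ℤ[ℤ/Mℤ]. -/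
noncomputable section

open scoped BigOperators

/-!
Let `σ` be an automorphism of order three of a field `K`, let `E` be its fixed field and
`Tr x = x + σ x + σ² x`. The points of the projective plane of the `E`-vector space `K` are the
elements of the group `Kˣ / Eˣ`.

If `b ∉ E`, then `Tr x = 0` and `Tr (b x) = 0` are the equations of two distinct lines, meeting in
the single point `σ b - σ² b`. Hence each nontrivial element of `Kˣ / Eˣ` is a quotient of exactly
one pair of points of the line `Tr x = 0`; writing points as powers of a generator gives Singer's
planar difference set.

As `Tr (u · σ u) = u · σ u · σ² u · Tr (u⁻¹)`, the set `S_c` consists of the `u ∈ Kˣ` with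
`Tr (u⁻¹) = 0` and `Tr (c u) = 0`, a conic cut by a line. It is a union of classes modulo `Eˣ`,
permuted by the involution `u ↦ (c u)⁻¹`. For `c = r²` the only class this involution can fix is
that of `r⁻¹`, since `(r u)² ∈ E` forces `r u ∈ E`. So if `S_c` is a single class, then that class
contains `r⁻¹` and `Tr r = 0`. Conversely, let `Tr r = 0`. An element `u` of `S_c` with
`t = r u ∉ E` would place `r` on the intersection of `Tr x = 0` with `Tr (t x) = 0` and also with
`Tr (t⁻¹ x) = 0`, but these two intersection points are distinct. In characteristic two every `c`
is a square `r²` and `Tr c = (Tr r)²`, so `T₁` is the Singer difference set.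
-/

section CubicTrace

/-- The relative trace `x + σ x + σ² x` to the fixed ring of an endomorphism `σ` with `σ³ = 1`,
viewed as a map from the ring to itself. -/
def cubicTrace {R : Type*} [NonAssocSemiring R] (σ : R →+* R) (x : R) : R :=
  x + σ x + σ (σ x)

theorem cubicTrace_mul_of_map_eq {R : Type*} [NonAssocSemiring R] {σ : R →+* R} {e : R}
    (he : σ e = e) (x : R) :
    cubicTrace σ (e * x) = e * cubicTrace σ x := by
  simp only [cubicTrace, map_mul, he, mul_add]

theorem cubicTrace_sq {R : Type*} [CommSemiring R] [CharP R 2] (σ : R →+* R) (x : R) :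
    cubicTrace σ (x ^ 2) = cubicTrace σ x ^ 2 := by
  simp only [cubicTrace, map_pow, CharTwo.add_sq]

section CommRing

variable {R : Type*} [CommRing R] {σ : R →+* R}

theorem map_eq_self_of_map_sq_eq_sq [NoZeroDivisors R] (hσ : ∀ x, σ (σ (σ x)) = x) {x : R}
    (hx : σ (x ^ 2) = x ^ 2) : σ x = x := by
  rw [map_pow, sq_eq_sq_iff_eq_or_eq_neg] at hx
  obtain h | h := hx
  · exact h
  · have hneg : x = -x := by simpa [h] using (hσ x).symm
    exact h.trans hneg.symm

theorem cubicTrace_map_sub_map_map (hσ : ∀ x, σ (σ (σ x)) = x) (b : R) :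
    cubicTrace σ (σ b - σ (σ b)) = 0 := by
  simp only [cubicTrace, map_sub, hσ]
  ring

theorem cubicTrace_mul_map_sub_map_map (hσ : ∀ x, σ (σ (σ x)) = x) (b : R) :
    cubicTrace σ (b * (σ b - σ (σ b))) = 0 := by
  simp only [cubicTrace, map_mul, map_sub, hσ]
  ring

end CommRing

variable {K : Type*} [Field K] {σ : K →+* K}

theorem cubicTrace_mul_map_self (hσ : ∀ x, σ (σ (σ x)) = x) (u : K) :
    cubicTrace σ (u * σ u) = u * σ u * σ (σ u) * cubicTrace σ u⁻¹ := by
  obtain rfl | hu := eq_or_ne u 0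
  · simp [cubicTrace]
  have hu₁ : σ u ≠ 0 := (map_ne_zero σ).mpr hu
  have hu₂ : σ (σ u) ≠ 0 := (map_ne_zero σ).mpr hu₁
  simp only [cubicTrace, map_mul, map_inv₀, hσ]
  field_simp
  ring

theorem cubicTrace_mul_map_self_eq_zero_iff (hσ : ∀ x, σ (σ (σ x)) = x) (u : K) :
    cubicTrace σ (u * σ u) = 0 ↔ cubicTrace σ u⁻¹ = 0 := by
  obtain rfl | hu := eq_or_ne u 0
  · simp
  · simp [cubicTrace_mul_map_self hσ, hu]

theorem map_sub_map_map_ne_zero {b : K} (hb : σ b ≠ b) : σ b - σ (σ b) ≠ 0 :=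
  sub_ne_zero.mpr fun h => hb (σ.injective h).symm

theorem map_div_eq_self_of_cubicTrace_eq_zero (hσ : ∀ x, σ (σ (σ x)) = x) {b x : K} (hb : σ b ≠ b)
    (hx : cubicTrace σ x = 0) (hbx : cubicTrace σ (b * x) = 0) :
    σ (x / (σ b - σ (σ b))) = x / (σ b - σ (σ b)) := by
  have hw : σ b - σ (σ b) ≠ 0 := map_sub_map_map_ne_zero hb
  rw [map_div₀, div_eq_div_iff ((map_ne_zero σ).mpr hw) hw]
  simp only [cubicTrace, map_mul, map_sub, hσ] at *
  linear_combination hbx - σ (σ b) * hx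

theorem map_eq_self_of_cubicTrace_eq_zero (hσ : ∀ x, σ (σ (σ x)) = x) {r t : K} (hr : r ≠ 0)
    (h : cubicTrace σ r = 0) (hmul : cubicTrace σ (t * r) = 0)
    (hinv : cubicTrace σ (t⁻¹ * r) = 0) : σ t = t := by
  by_contra hne
  have ht : t ≠ 0 := fun ht => hne (by rw [ht, map_zero])
  have hne_inv : σ t⁻¹ ≠ t⁻¹ := by rwa [map_inv₀, Ne, inv_inj]
  have ht₁ : σ t ≠ 0 := (map_ne_zero σ).mpr ht
  have ht₂ : σ (σ t) ≠ 0 := (map_ne_zero σ).mpr ht₁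
  have hw : σ t⁻¹ - σ (σ t⁻¹) ≠ 0 := map_sub_map_map_ne_zero hne_inv
  have hratio : r / (σ t⁻¹ - σ (σ t⁻¹)) / (r / (σ t - σ (σ t))) = -(σ t * σ (σ t)) := by
    rw [div_div_div_cancel_left' _ _ hr, div_eq_iff hw]
    simp only [map_inv₀]
    field_simp
    ring
  have hfixed : σ (-(σ t * σ (σ t))) = -(σ t * σ (σ t)) := by
    rw [← hratio, map_div₀, map_div_eq_self_of_cubicTrace_eq_zero hσ hne h hmul,
      map_div_eq_self_of_cubicTrace_eq_zero hσ hne_inv h hinv]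
  rw [map_neg, map_mul, hσ, neg_inj, mul_comm] at hfixed
  exact hne (mul_right_cancel₀ ht₂ hfixed).symm

end CubicTrace

section FixedUnits

variable {K : Type*} [Field K] {σ : K →+* K}

/-- The multiplicative group `Eˣ` of the fixed field `E` of `σ`, as a subgroup of `Kˣ`. Its cosets
are the points of the projective space of the `E`-vector space `K`. -/
def fixedUnits (σ : K →+* K) : Subgroup Kˣ :=
  (Units.map (σ : K →* K)).eqLocus (MonoidHom.id Kˣ)

theorem mem_fixedUnits {x : Kˣ} : x ∈ fixedUnits σ ↔ σ x = x :=
  Units.ext_iff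

theorem cubicTrace_eq_zero_iff_of_div_mem {x y : Kˣ} (h : x / y ∈ fixedUnits σ) :
    cubicTrace σ (x : K) = 0 ↔ cubicTrace σ (y : K) = 0 := by
  rw [show (x : K) = (x / y : Kˣ) * y by rw [← Units.val_mul, div_mul_cancel],
    cubicTrace_mul_of_map_eq (mem_fixedUnits.mp h), mul_eq_zero, or_iff_right (Units.ne_zero _)]

theorem exists_unit_cubicTrace_eq_zero (hσ : ∀ x, σ (σ (σ x)) = x) {b : Kˣ}
    (hb : b ∉ fixedUnits σ) :
    ∃ w : Kˣ, cubicTrace σ (w : K) = 0 ∧ cubicTrace σ ((b * w : Kˣ) : K) = 0 ∧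
      ∀ x : Kˣ, cubicTrace σ (x : K) = 0 → cubicTrace σ ((b * x : Kˣ) : K) = 0 →
        x / w ∈ fixedUnits σ := by
  rw [mem_fixedUnits] at hb
  refine ⟨Units.mk0 _ (map_sub_map_map_ne_zero hb), cubicTrace_map_sub_map_map hσ _,
    cubicTrace_mul_map_sub_map_map hσ _, fun x hx hbx => ?_⟩
  rw [mem_fixedUnits, Units.val_div_eq_div_val]
  exact map_div_eq_self_of_cubicTrace_eq_zero hσ hb hx hbx

end FixedUnits

section Singer

/-- A planar difference set in an additive group: every nonzero element is a difference of exactly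
one pair of elements of `D`. -/
def IsPlanarDifferenceSet {G : Type*} [AddGroup G] (D : Set G) : Prop :=
  ∀ a : G, a ≠ 0 → ∃! p : G × G, p.1 ∈ D ∧ p.2 ∈ D ∧ p.1 - p.2 = a

theorem zpow_mem_iff_index_dvd {G : Type*} [CommGroup G] {g : G}
    (hg : ∀ x, x ∈ Subgroup.zpowers g) (H : Subgroup G) (n : ℤ) :
    g ^ n ∈ H ↔ (H.index : ℤ) ∣ n := by
  have hgen : ∀ x : G ⧸ H, x ∈ Subgroup.zpowers (g : G ⧸ H) := by
    rintro ⟨x⟩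
    obtain ⟨k, rfl⟩ := hg x
    exact ⟨k, rfl⟩
  rw [← QuotientGroup.eq_one_iff, QuotientGroup.mk_zpow, ← orderOf_dvd_iff_zpow_eq_one,
    orderOf_eq_card_of_forall_mem_zpowers hgen, Subgroup.index]

theorem zpow_div_zpow_mem_iff_intCast_eq {G : Type*} [CommGroup G] {g : G}
    (hg : ∀ x, x ∈ Subgroup.zpowers g) (H : Subgroup G) (m n : ℤ) :
    g ^ m / g ^ n ∈ H ↔ (m : ZMod H.index) = n := by
  rw [div_eq_mul_inv, ← zpow_sub, zpow_mem_iff_index_dvd hg, eq_comm,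
    ZMod.intCast_eq_intCast_iff_dvd_sub]

variable {K : Type*} [Field K] {σ : K →+* K}

/-- The exponents of the powers of `ω` on the line `Tr = 0`, taken modulo `M`. Representatives in
`[0, M)` are used; the choice is immaterial when `M` is the index of `fixedUnits σ`. -/
def singerSet (σ : K →+* K) (ω : Kˣ) (M : ℕ) : Set (ZMod M) :=
  {i | cubicTrace σ ((ω ^ i.val : Kˣ) : K) = 0}

theorem intCast_mem_singerSet {ω : Kˣ} {M : ℕ} [NeZero M] (hω : ∀ x, x ∈ Subgroup.zpowers ω)
    (hM : (fixedUnits σ).index = M) (n : ℤ) :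
    (n : ZMod M) ∈ singerSet σ ω M ↔ cubicTrace σ ((ω ^ n : Kˣ) : K) = 0 := by
  subst hM
  refine cubicTrace_eq_zero_iff_of_div_mem ?_
  rw [← zpow_natCast, zpow_div_zpow_mem_iff_intCast_eq hω, Int.cast_natCast,
    ZMod.natCast_zmod_val]

theorem isPlanarDifferenceSet_singerSet (hσ : ∀ x, σ (σ (σ x)) = x) {ω : Kˣ} {M : ℕ} [NeZero M]
    (hω : ∀ x, x ∈ Subgroup.zpowers ω) (hM : (fixedUnits σ).index = M) :
    IsPlanarDifferenceSet (singerSet σ ω M) := by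
  have mem (n : ℤ) := intCast_mem_singerSet hω hM n
  subst hM
  intro a ha
  obtain ⟨n, rfl⟩ := ZMod.intCast_surjective a
  have hb : ω ^ n ∉ fixedUnits σ := by
    rwa [zpow_mem_iff_index_dvd hω, ← ZMod.intCast_zmod_eq_zero_iff_dvd]
  obtain ⟨w, hw, hbw, hunique⟩ := exists_unit_cubicTrace_eq_zero hσ hb
  obtain ⟨j, rfl⟩ := hω w
  refine ⟨((n + j : ℤ), (j : ℤ)), ⟨?_, (mem j).mpr hw, by simp⟩, ?_⟩
  · rwa [mem, zpow_add]
  · rintro ⟨i', j'⟩ ⟨hi', hj', hsub⟩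
    obtain ⟨k, rfl⟩ := ZMod.intCast_surjective j'
    obtain rfl : i' = ((n + k : ℤ) : ZMod _) := by rw [Int.cast_add, ← hsub, sub_add_cancel]
    rw [mem] at hj'
    rw [mem, zpow_add] at hi'
    have hkj := (zpow_div_zpow_mem_iff_intCast_eq hω _ k j).mp (hunique _ hj' hi')
    simp only [Int.cast_add, hkj]

end Singer

section ConicSection

open scoped Pointwise

variable {K : Type*} [Field K] {σ : K →+* K}

/-- The units `u` with `Tr (u⁻¹) = 0` and `Tr (c u) = 0`: the intersection of a conic with a line,
as a union of cosets of `fixedUnits σ`. -/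
def conicSection (σ : K →+* K) (c : Kˣ) : Set Kˣ :=
  {u | cubicTrace σ ((u⁻¹ : Kˣ) : K) = 0 ∧ cubicTrace σ ((c * u : Kˣ) : K) = 0}

theorem smul_fixedUnits_subset_conicSection {c u : Kˣ} (hu : u ∈ conicSection σ c) :
    u • (fixedUnits σ : Set Kˣ) ⊆ conicSection σ c := by
  intro v hv
  rw [mem_leftCoset_iff, SetLike.mem_coe] at hv
  constructor
  · refine (cubicTrace_eq_zero_iff_of_div_mem ?_).mpr hu.1
    simpa [div_eq_mul_inv, mul_comm] using inv_mem hv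
  · refine (cubicTrace_eq_zero_iff_of_div_mem ?_).mpr hu.2
    rwa [mul_div_mul_left_eq_div, div_eq_inv_mul]

theorem inv_mul_mem_conicSection {c u : Kˣ} (hu : u ∈ conicSection σ c) :
    (c * u)⁻¹ ∈ conicSection σ c := by
  refine ⟨by simpa only [inv_inv] using hu.2, ?_⟩
  simpa only [mul_inv, mul_inv_cancel_left] using hu.1

theorem conicSection_sq_eq_smul_fixedUnits (hσ : ∀ x, σ (σ (σ x)) = x) {r : Kˣ}
    (hr : cubicTrace σ (r : K) = 0) :
    conicSection σ (r ^ 2) = r⁻¹ • (fixedUnits σ : Set Kˣ) := by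
  refine subset_antisymm (fun u hu => ?_) (smul_fixedUnits_subset_conicSection ⟨?_, ?_⟩)
  · have hmul : cubicTrace σ (((r * u : Kˣ) : K) * r) = 0 := by
      rw [← Units.val_mul, mul_right_comm, ← sq]
      exact hu.2
    have hinv : cubicTrace σ (((r * u : Kˣ) : K)⁻¹ * r) = 0 := by
      rw [← Units.val_inv_eq_inv_val, ← Units.val_mul, mul_inv_rev, inv_mul_cancel_right]
      exact hu.1
    rw [mem_leftCoset_iff, inv_inv, SetLike.mem_coe, mem_fixedUnits]
    exact map_eq_self_of_cubicTrace_eq_zero hσ r.ne_zero hr hmul hinv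
  · rwa [inv_inv]
  · rwa [sq, mul_inv_cancel_right]

theorem cubicTrace_eq_zero_of_conicSection_sq_eq_smul (hσ : ∀ x, σ (σ (σ x)) = x) {r u : Kˣ}
    (h : conicSection σ (r ^ 2) = u • (fixedUnits σ : Set Kˣ)) :
    cubicTrace σ (r : K) = 0 := by
  have hu : u ∈ conicSection σ (r ^ 2) := h ▸ mem_own_leftCoset (fixedUnits σ).toSubmonoid u
  have hinvol := inv_mul_mem_conicSection hu
  rw [h, mem_leftCoset_iff, SetLike.mem_coe, ← mul_inv_rev, inv_mem_iff] at hinvol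
  have hsq : (r * u) ^ 2 ∈ fixedUnits σ := by
    rwa [show (r * u) ^ 2 = r ^ 2 * u * u by rw [mul_pow, sq u, mul_assoc]]
  have hru : r * u ∈ fixedUnits σ := by
    rw [mem_fixedUnits] at hsq ⊢
    exact map_eq_self_of_map_sq_eq_sq hσ (by simpa only [Units.val_pow_eq_pow_val] using hsq)
  refine (cubicTrace_eq_zero_iff_of_div_mem ?_).mp hu.2
  rwa [sq, mul_right_comm, mul_div_cancel_right]

theorem ncard_conicSection_sq_eq_card_fixedUnits_iff [Finite K] (hσ : ∀ x, σ (σ (σ x)) = x)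
    {r : Kˣ} :
    (conicSection σ (r ^ 2)).ncard = Nat.card (fixedUnits σ) ↔ cubicTrace σ (r : K) = 0 := by
  have hcoset (u : Kˣ) : (u • (fixedUnits σ : Set Kˣ)).ncard = Nat.card (fixedUnits σ) := by
    rw [Set.ncard_smul_set, ← Nat.card_coe_set_eq, SetLike.coe_sort_coe]
  refine ⟨fun hcard => ?_, fun hr => ?_⟩
  · obtain ⟨u, hu⟩ : (conicSection σ (r ^ 2)).Nonempty :=
      Set.nonempty_of_ncard_ne_zero (hcard ▸ Nat.card_pos.ne')
    refine cubicTrace_eq_zero_of_conicSection_sq_eq_smul hσ (u := u) (Eq.symm ?_)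
    exact Set.eq_of_subset_of_ncard_le (smul_fixedUnits_subset_conicSection hu)
      (hcard.trans (hcoset u).symm).le
  · rw [conicSection_sq_eq_smul_fixedUnits hσ hr, hcoset]

theorem ncard_conicSection_eq_card_fixedUnits_iff [Finite K] [CharP K 2]
    (hσ : ∀ x, σ (σ (σ x)) = x) {c : Kˣ} :
    (conicSection σ c).ncard = Nat.card (fixedUnits σ) ↔ cubicTrace σ (c : K) = 0 := by
  obtain ⟨r, hr⟩ := FiniteField.isSquare_of_char_two (ringChar.eq K 2) (c : K)
  have hr0 : r ≠ 0 := by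
    rintro rfl
    exact c.ne_zero (by rw [hr, mul_zero])
  obtain rfl : c = Units.mk0 r hr0 ^ 2 := Units.ext (by simp [hr, sq])
  rw [ncard_conicSection_sq_eq_card_fixedUnits_iff hσ, Units.val_pow_eq_pow_val, cubicTrace_sq,
    sq_eq_zero_iff]

end ConicSection

section Frobenius

variable {F : Type*} [Field F]

theorem fixedUnits_iterateFrobenius (p : ℕ) [ExpChar F p] (s : ℕ) :
    fixedUnits (iterateFrobenius F p s) = (powMonoidHom (p ^ s - 1) : Fˣ →* Fˣ).ker := by
  ext x
  have hpos : p ^ s ≠ 0 := (expChar_pow_pos F p s).ne'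
  rw [mem_fixedUnits, iterateFrobenius_def, ← Units.val_pow_eq_pow_val, Units.val_inj,
    MonoidHom.mem_ker, powMonoidHom_apply, ← mul_eq_right (b := x), pow_sub_one_mul hpos]

variable [Finite F] {p s : ℕ} [ExpChar F p]

theorem iterateFrobenius_iterateFrobenius_iterateFrobenius (hF : Nat.card F = p ^ (3 * s)) (x : F) :
    iterateFrobenius F p s (iterateFrobenius F p s (iterateFrobenius F p s x)) = x := by
  have := Fintype.ofFinite F
  rw [← iterateFrobenius_add_apply, ← iterateFrobenius_add_apply, iterateFrobenius_def,
    show s + s + s = 3 * s by ring, ← hF, Nat.card_eq_fintype_card, FiniteField.pow_card]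

theorem pow_three_mul_sub_one (p s : ℕ) :
    p ^ (3 * s) - 1 = (p ^ s - 1) * (p ^ (2 * s) + p ^ s + 1) := by
  rw [mul_comm 3, mul_comm 2, pow_mul, pow_mul]
  obtain h | h := Nat.eq_zero_or_pos (p ^ s)
  · simp [h]
  · zify [h, Nat.one_le_pow 3 _ h]
    ring

theorem card_fixedUnits_iterateFrobenius (hF : Nat.card F = p ^ (3 * s)) :
    Nat.card (fixedUnits (iterateFrobenius F p s)) = p ^ s - 1 := by
  rw [fixedUnits_iterateFrobenius, IsCyclic.card_powMonoidHom_ker, Nat.card_units, hF,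
    pow_three_mul_sub_one, Nat.gcd_mul_right_left]

theorem index_fixedUnits_iterateFrobenius (hF : Nat.card F = p ^ (3 * s)) :
    (fixedUnits (iterateFrobenius F p s)).index = p ^ (2 * s) + p ^ s + 1 := by
  have hcard := card_fixedUnits_iterateFrobenius hF
  refine Nat.eq_of_mul_eq_mul_left (hcard ▸ Nat.card_pos : 0 < p ^ s - 1) ?_
  rw [← pow_three_mul_sub_one, ← hF, ← Nat.card_units, ← hcard, Subgroup.card_mul_index]

end Frobenius

section CharTwo

variable {F : Type*} [Field F] [CharP F 2] {s : ℕ}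

theorem cubicTrace_iterateFrobenius (x : F) :
    cubicTrace (iterateFrobenius F 2 s) x = trFE s x := by
  rw [cubicTrace, ← iterateFrobenius_add_apply, ← two_mul]
  rfl

theorem Sa_eq_image_conicSection [Finite F] (hF : Nat.card F = 2 ^ (3 * s)) (ω : Fˣ) (n : ℤ) :
    Sa s (ω : F) n = Units.val '' conicSection (iterateFrobenius F 2 s) (ω ^ n) := by
  have hconic (u : F) : trFE s (u ^ (2 ^ s + 1)) = 0 ↔ trFE s u⁻¹ = 0 := by
    rw [pow_succ', ← iterateFrobenius_def, ← cubicTrace_iterateFrobenius,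
      ← cubicTrace_iterateFrobenius, cubicTrace_mul_map_self_eq_zero_iff
        (iterateFrobenius_iterateFrobenius_iterateFrobenius hF)]
  ext u
  constructor
  · rintro ⟨hu, hquad, hlin⟩
    refine ⟨Units.mk0 u hu, ⟨?_, ?_⟩, rfl⟩
    · simpa [cubicTrace_iterateFrobenius] using (hconic u).mp hquad
    · simpa [cubicTrace_iterateFrobenius] using hlin
  · rintro ⟨u, ⟨hinv, hlin⟩, rfl⟩
    refine ⟨u.ne_zero, (hconic u).mpr ?_, ?_⟩
    · simpa [cubicTrace_iterateFrobenius] using hinv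
    · simpa [cubicTrace_iterateFrobenius] using hlin

theorem T1_eq_singerSet [Finite F] (hF : Nat.card F = 2 ^ (3 * s)) (ω : Fˣ) :
    T1 s (ω : F) = singerSet (iterateFrobenius F 2 s) ω (Mof s) := by
  ext i
  have hσ := iterateFrobenius_iterateFrobenius_iterateFrobenius (p := 2) hF
  change (Sa s (ω : F) i.val).ncard = 2 ^ s - 1 ↔ cubicTrace _ _ = 0
  rw [Sa_eq_image_conicSection hF, Set.ncard_image_of_injective _ Units.val_injective,
    ← card_fixedUnits_iterateFrobenius hF, ncard_conicSection_eq_card_fixedUnits_iff hσ,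
    zpow_natCast]

end CharTwo

theorem ne_zero_of_forall_exists_eq_pow {G₀ : Type*} [GroupWithZero G₀] [Nontrivial G₀ˣ] {ω : G₀}
    (hω : ∀ x : G₀, x ≠ 0 → ∃ n : ℕ, x = ω ^ n) : ω ≠ 0 := by
  rintro rfl
  obtain ⟨x, hx⟩ := exists_ne (1 : G₀ˣ)
  obtain ⟨n, hn⟩ := hω x x.ne_zero
  rcases eq_or_ne n 0 with rfl | hn0
  · exact hx (Units.ext (by simpa using hn))
  · exact x.ne_zero (by rw [hn, zero_pow hn0])

theorem statement5 (s : ℕ) (hs : 1 ≤ s) (F : Type*) [Field F] [Fintype F]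
    (hF : Fintype.card F = 2 ^ (3 * s)) (ω : F)
    (hω : ∀ x : F, x ≠ 0 → ∃ n : ℕ, x = ω ^ n) :
    ∀ a : ZMod (Mof s), a ≠ 0 →
      ∃! p : ZMod (Mof s) × ZMod (Mof s),
        p.1 ∈ T1 s ω ∧ p.2 ∈ T1 s ω ∧ p.1 - p.2 = a := by
  have hcard : Nat.card F = 2 ^ (3 * s) := Nat.card_eq_fintype_card.trans hF
  have : Fact (Nat.Prime 2) := ⟨Nat.prime_two⟩
  have : CharP F 2 := charP_of_card_eq_prime_pow hF
  have : Nontrivial Fˣ := by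
    have : 2 ^ 3 ≤ 2 ^ (3 * s) := Nat.pow_le_pow_right two_pos (by omega)
    rw [← Finite.one_lt_card_iff_nontrivial, Nat.card_units, hcard]
    omega
  lift ω to Fˣ using (ne_zero_of_forall_exists_eq_pow hω).isUnit
  have hgen : ∀ x : Fˣ, x ∈ Subgroup.zpowers ω := fun x => by
    obtain ⟨n, hn⟩ := hω x x.ne_zero
    exact ⟨n, Units.ext (by simp [hn])⟩
  rw [T1_eq_singerSet hcard]
  exact isPlanarDifferenceSet_singerSet (iterateFrobenius_iterateFrobenius_iterateFrobenius hcard)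
    hgen (index_fixedUnits_iterateFrobenius hcard)
end
end
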